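/- If a ribbon a admits an extension with no critical points in the open unit disk (that is, γ(a) = 0), then its signature satisfies σ(a) = 2. -/

import Mathlib

open scoped RealInnerProductSpace

noncomputable section

abbrev E2 : Type := EuclideanSpace ℝ (Fin 2)

/-- The point (cos t, sin t) on the unit circle in ℝ². -/
def sphPt (t : ℝ) : E2 := (EuclideanSpace.equiv (Fin 2) ℝ).symm ![Real.cos t, Real.sin t]

/-- A ribbon with `n` nodes, encoded via the angle parametrization `g = φ ∘ (cos, sin)`
of a C^∞ function `φ : S¹ → ℝ` whose critical points on the circle are exactly the `n`
nondegenerate local extrema (nodes) at angles `θ 0 < θ 1 < ⋯ < θ (n-1)` in `[0, 2π)`,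
with pairwise distinct critical values, together with a marking `ν` of the nodes by `±1`. -/
structure Ribbon (n : ℕ) : Type where
  g : ℝ → ℝ
  θ : Fin n → ℝ
  ν : Fin n → ℤ
  n_even : Even n
  n_pos : 0 < n
  smooth_g : ContDiff ℝ (⊤ : ℕ∞) g
  periodic_g : Function.Periodic g (2 * Real.pi)
  theta_mem : ∀ i, θ i ∈ Set.Ico (0 : ℝ) (2 * Real.pi)
  theta_mono : StrictMono θ
  node_crit : ∀ i, deriv g (θ i) = 0
  node_nondeg : ∀ i, deriv (deriv g) (θ i) ≠ 0
  crit_only : ∀ t ∈ Set.Ico (0 : ℝ) (2 * Real.pi), deriv g t = 0 → ∃ i, t = θ i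
  values_distinct : ∀ i j, g (θ i) = g (θ j) → i = j
  nu_sign : ∀ i, ν i = 1 ∨ ν i = -1

/-- The signature σ = s₊ − s₋ of a ribbon. -/
def Ribbon.sigma {n : ℕ} (a : Ribbon n) : ℤ := ∑ i, a.ν i

/-- Critical points of `f` in the open unit disk. -/
def critPts (f : E2 → ℝ) : Set E2 :=
  {x | x ∈ Metric.ball (0 : E2) 1 ∧ fderiv ℝ f x = 0}

/-- `f : ℝ² → ℝ` is an extension of the ribbon `a`: it is C^∞, agrees with `φ` on the unit
circle, has nowhere-vanishing gradient on the circle, and at each node the radial derivative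
`⟪∇f(p), p⟫` has sign `ν p` if `p` is a local maximum of `φ` (second derivative of `g`
negative there) and sign `−ν p` if `p` is a local minimum of `φ`. -/
def IsExtension {n : ℕ} (a : Ribbon n) (f : E2 → ℝ) : Prop :=
  ContDiff ℝ (⊤ : ℕ∞) f ∧
  (∀ t : ℝ, f (sphPt t) = a.g t) ∧
  (∀ x ∈ Metric.sphere (0 : E2) 1, fderiv ℝ f x ≠ 0) ∧
  (∀ i : Fin n,
    (deriv (deriv a.g) (a.θ i) < 0 →
      0 < (a.ν i : ℝ) * ⟪gradient f (sphPt (a.θ i)), sphPt (a.θ i)⟫) ∧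
    (0 < deriv (deriv a.g) (a.θ i) →
      (a.ν i : ℝ) * ⟪gradient f (sphPt (a.θ i)), sphPt (a.θ i)⟫ < 0))

/-- The ribbon invariant γ: the infimum, over all extensions `f` of `a`, of the number of
critical points of `f` in the open unit disk (a value in `ℕ∞`). -/
def gammaR {n : ℕ} (a : Ribbon n) : ℕ∞ :=
  sInf {k : ℕ∞ | ∃ f : E2 → ℝ, IsExtension a f ∧ (critPts f).encard = k}

/-!
Along the unit circle write the gradient of `f` in the rotating frame (radial, tangential) as a
complex number `Z t`; its imaginary part is `φ'`, so `Z` meets the real axis exactly at the nodes.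
Since `∇f` has no zero in the closed disk, it has a continuous logarithm there and hence winding
number `0` along the circle, while the frame turns once: the argument of `Z` changes by `-2π` in one
revolution. On the other hand `arg Z / π` is an integer exactly at the nodes, where the sign
condition `ν · ∂ᵣf · φ'' < 0` makes it cross that integer in the direction `-ν`. So the integer part
of `arg Z / π` changes by `-∑ ν` in one revolution, and `-∑ ν = -2`.
-/

open Set Filter Topology
open scoped Real ComplexConjugate

/-! ### Signed integer crossings -/

/-- `u` passes strictly through its value at `t`, upwards if `0 < ε` and downwards if `ε < 0`.
This is phrased by signs near `t` so that it applies to arguments of curves that are only known to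
be continuous. -/
def CrossesWithSign (u : ℝ → ℝ) (t : ℝ) (ε : ℤ) : Prop :=
  ∀ᶠ s in 𝓝[≠] t, 0 < ε * ((u s - u t) * (s - t))

lemma floor_eq_floor_of_isPreconnected {X : Type*} [TopologicalSpace X] {S : Set X}
    (hS : IsPreconnected S) {u : X → ℝ} (hu : ContinuousOn u S)
    (hint : ∀ x ∈ S, u x ∉ range ((↑) : ℤ → ℝ)) {x y : X} (hx : x ∈ S) (hy : y ∈ S) :
    ⌊u x⌋ = ⌊u y⌋ := by
  wlog hlt : ⌊u x⌋ < ⌊u y⌋ generalizing x y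
  · rcases (not_lt.1 hlt).eq_or_lt with h | h
    · exact h.symm
    · exact (this hy hx h).symm
  obtain ⟨z, hz, hzy⟩ := hS.intermediate_value hx hy hu
    (⟨(Int.floor_lt.1 hlt).le, Int.floor_le (u y)⟩ : (⌊u y⌋ : ℝ) ∈ Icc (u x) (u y))
  exact absurd ⟨_, hzy.symm⟩ (hint z hz)

lemma CrossesWithSign.eventually_floor {u : ℝ → ℝ} {t : ℝ} {ε k : ℤ}
    (hcross : CrossesWithSign u t ε) (hε : ε = 1 ∨ ε = -1) (hu : ContinuousAt u t)
    (hk : u t = k) :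
    ∀ᶠ s in 𝓝[≠] t, 2 * ⌊u s⌋ + 1 = 2 * k + ε * SignType.sign (s - t) := by
  have hnear : ∀ᶠ s in 𝓝[≠] t, |u s - k| < 1 := by
    have hcont : ContinuousAt (fun s => |u s - k|) t := by fun_prop
    exact nhdsWithin_le_nhds (hcont.eventually_lt_const (by simp [hk]))
  filter_upwards [hcross, hnear, self_mem_nhdsWithin] with s hs hsk hst
  rw [hk] at hs
  obtain ⟨hlower, hupper⟩ := abs_lt.1 hsk
  have floor_of_pos (h : 0 < u s - k) : ⌊u s⌋ = k :=
    Int.floor_eq_iff.2 ⟨by linarith, by linarith⟩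
  have floor_of_neg (h : u s - k < 0) : ⌊u s⌋ = k - 1 :=
    Int.floor_eq_iff.2 ⟨by push_cast; linarith, by push_cast; linarith⟩
  rcases lt_or_gt_of_ne (sub_ne_zero.2 hst) with hneg | hpos
  · rw [sign_neg hneg, SignType.coe_neg, SignType.coe_one]
    have hopposite : ε * (u s - k) < 0 := by nlinarith
    rcases hε with rfl | rfl <;> push_cast at hopposite
    · rw [floor_of_neg (by linarith)]; ring
    · rw [floor_of_pos (by linarith)]; ring
  · rw [sign_pos hpos, SignType.coe_one]
    have hsame : 0 < ε * (u s - k) := by nlinarith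
    rcases hε with rfl | rfl <;> push_cast at hsame
    · rw [floor_of_pos (by linarith)]; ring
    · rw [floor_of_neg (by linarith)]; ring

lemma floor_sub_floor_eq_of_crossesWithSign {u : ℝ → ℝ} {a b t : ℝ} {ε : ℤ}
    (hu : ContinuousOn u (Icc a b)) (ht : t ∈ Ioo a b)
    (hint : ∀ s ∈ Icc a b, u s ∈ range ((↑) : ℤ → ℝ) ↔ s = t)
    (hε : ε = 1 ∨ ε = -1) (hcross : CrossesWithSign u t ε) : ⌊u b⌋ - ⌊u a⌋ = ε := by
  obtain ⟨k, hk⟩ := (hint t (Ioo_subset_Icc_self ht)).2 rfl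
  have hfloor := hcross.eventually_floor hε (hu.continuousAt (Icc_mem_nhds ht.1 ht.2)) hk.symm
  obtain ⟨x, hx, hxt⟩ :=
    ((hfloor.filter_mono (nhdsLT_le_nhdsNE t)).and (Ioo_mem_nhdsLT ht.1)).exists
  obtain ⟨y, hy, hty⟩ :=
    ((hfloor.filter_mono (nhdsGT_le_nhdsNE t)).and (Ioo_mem_nhdsGT ht.2)).exists
  have hleft : ⌊u a⌋ = ⌊u x⌋ := by
    have hsub : Icc a x ⊆ Icc a b := Icc_subset_Icc_right (hxt.2.trans ht.2).le
    exact floor_eq_floor_of_isPreconnected isPreconnected_Icc (hu.mono hsub)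
      (fun s hs => mt (hint s (hsub hs)).1 (hs.2.trans_lt hxt.2).ne)
      (left_mem_Icc.2 hxt.1.le) (right_mem_Icc.2 hxt.1.le)
  have hright : ⌊u y⌋ = ⌊u b⌋ := by
    have hsub : Icc y b ⊆ Icc a b := Icc_subset_Icc_left (ht.1.trans hty.1).le
    exact floor_eq_floor_of_isPreconnected isPreconnected_Icc (hu.mono hsub)
      (fun s hs => mt (hint s (hsub hs)).1 (hty.1.trans_le hs.1).ne')
      (left_mem_Icc.2 hty.2.le) (right_mem_Icc.2 hty.2.le)
  rw [sign_neg (sub_neg.2 hxt.2)] at hx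
  rw [sign_pos (sub_pos.2 hty.1)] at hy
  simp only [SignType.coe_neg, SignType.coe_one] at hx hy
  omega

lemma floor_sub_floor_eq_sum_of_crossesWithSign {ι : Type*} {u : ℝ → ℝ} {a b : ℝ} (hab : a ≤ b)
    (hu : ContinuousOn u (Icc a b)) {s : Finset ι} {θ : ι → ℝ} (hinj : InjOn θ s)
    (hmem : ∀ i ∈ s, θ i ∈ Ioo a b)
    (hint : ∀ t ∈ Icc a b, u t ∈ range ((↑) : ℤ → ℝ) ↔ t ∈ θ '' s)
    {ε : ι → ℤ} (hε : ∀ i ∈ s, ε i = 1 ∨ ε i = -1)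
    (hcross : ∀ i ∈ s, CrossesWithSign u (θ i) (ε i)) :
    ⌊u b⌋ - ⌊u a⌋ = ∑ i ∈ s, ε i := by
  classical
  induction s using Finset.induction_on_max_value θ generalizing b with
  | empty =>
    rw [Finset.sum_empty, sub_eq_zero]
    exact floor_eq_floor_of_isPreconnected isPreconnected_Icc hu
      (fun t ht => mt (hint t ht).1 (by simp)) (right_mem_Icc.2 hab) (left_mem_Icc.2 hab)
  | insert i s his hmax ih =>
    simp only [Finset.forall_mem_insert] at hmem hε hcross
    rw [Finset.coe_insert] at hinj hint
    have hlt : ∀ j ∈ s, θ j < θ i := fun j hj => (hmax j hj).lt_of_ne fun h =>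
      his (hinj (.inr hj) (.inl rfl) h ▸ hj)
    obtain ⟨c, hcs, hac, hci⟩ : ∃ c, (∀ j ∈ s, θ j < c) ∧ c ∈ Ioo a (θ i) :=
      (((Finset.eventually_all s).2 fun j hj => eventually_nhdsWithin_of_eventually_nhds
        (eventually_gt_nhds (hlt j hj))).and (Ioo_mem_nhdsLT hmem.1.1)).exists
    have hcb : c < b := hci.trans hmem.1.2
    have hbefore : ⌊u c⌋ - ⌊u a⌋ = ∑ j ∈ s, ε j := by
      refine ih hac.le (hu.mono (Icc_subset_Icc_right hcb.le)) (hinj.mono (subset_insert _ _))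
        (fun j hj => ⟨(hmem.2 j hj).1, hcs j hj⟩) (fun t ht => ?_) hε.2 hcross.2
      rw [hint t ⟨ht.1, ht.2.trans hcb.le⟩, image_insert_eq, mem_insert_iff,
        or_iff_right (ht.2.trans_lt hci).ne]
    have hafter : ⌊u b⌋ - ⌊u c⌋ = ε i := by
      refine floor_sub_floor_eq_of_crossesWithSign (hu.mono (Icc_subset_Icc_left hac.le))
        ⟨hci, hmem.1.2⟩ (fun t ht => ?_) hε.1 hcross.1
      rw [hint t ⟨hac.le.trans ht.1, ht.2⟩, image_insert_eq, mem_insert_iff, or_iff_left]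
      rintro ⟨j, hj, rfl⟩
      exact (hcs j hj).not_ge ht.1
    rw [Finset.sum_insert his, ← hbefore, ← hafter]
    ring

lemma sum_crossing_signs_eq_of_add_period {ι : Type*} [Fintype ι] {u : ℝ → ℝ}
    (hu : Continuous u) {T : ℝ} (hT : 0 < T) {m : ℤ} (hperiod : ∀ t, u (t + T) = u t + m)
    {θ : ι → ℝ} (hinj : θ.Injective) (hmem : ∀ i, θ i ∈ Ico 0 T)
    (hint : ∀ t ∈ Ico 0 T, u t ∈ range ((↑) : ℤ → ℝ) ↔ t ∈ range θ)
    {ε : ι → ℤ} (hε : ∀ i, ε i = 1 ∨ ε i = -1)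
    (hcross : ∀ i, CrossesWithSign u (θ i) (ε i)) : ∑ i, ε i = m := by
  -- Slide the period `[0, T)` slightly to the left, so that no crossing lies at its ends.
  obtain ⟨c, hθc, hTc, hc⟩ : ∃ c, (∀ i, θ i < c + T) ∧ c ∈ Ioo (-T) 0 := by
    have hnear (i : ι) : ∀ᶠ c in 𝓝[<] (0 : ℝ), θ i < c + T := by
      have hcont : ContinuousAt (fun c : ℝ => c + T) 0 := by fun_prop
      exact nhdsWithin_le_nhds (hcont.eventually_const_lt (by simpa using (hmem i).2))
    exact ((eventually_all.2 hnear).and (Ioo_mem_nhdsLT (neg_lt_zero.2 hT))).exists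
  have hint_shifted : ∀ t ∈ Icc c (c + T),
      u t ∈ range ((↑) : ℤ → ℝ) ↔ t ∈ θ '' (Finset.univ : Finset ι) := by
    intro t ht
    rw [Finset.coe_univ, image_univ]
    rcases lt_or_ge t 0 with hneg | hnonneg
    · have hshift : u t ∈ range ((↑) : ℤ → ℝ) ↔ u (t + T) ∈ range ((↑) : ℤ → ℝ) := by
        rw [hperiod]
        constructor
        · rintro ⟨k, hk⟩
          exact ⟨k + m, by push_cast; rw [hk]⟩
        · rintro ⟨k, hk⟩
          exact ⟨k - m, by push_cast; rw [hk]; ring⟩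
      rw [hshift, hint _ ⟨by linarith [ht.1], by linarith⟩]
      refine iff_of_false ?_ ?_ <;> rintro ⟨i, hi⟩
      · linarith [hθc i, ht.1]
      · linarith [(hmem i).1]
    · exact hint t ⟨hnonneg, by linarith [ht.2]⟩
  have hjump := floor_sub_floor_eq_sum_of_crossesWithSign (le_add_of_nonneg_right hT.le)
    hu.continuousOn hinj.injOn (fun i _ => ⟨hc.trans_le (hmem i).1, hθc i⟩) hint_shifted
    (fun i _ => hε i) (fun i _ => hcross i)
  rw [← hjump, hperiod, Int.floor_add_intCast]
  ring

/-! ### Continuous logarithms -/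

lemma exists_continuousMap_exp_eq {X : Type*} [TopologicalSpace X] [SimplyConnectedSpace X]
    [LocallyPathConnectedSpace X] (F : C(X, ℂ)) (hF : ∀ x, F x ≠ 0) :
    ∃ L : C(X, ℂ), ∀ x, Complex.exp (L x) = F x := by
  obtain ⟨x₀⟩ : Nonempty X := inferInstance
  obtain ⟨L, ⟨-, hL⟩, -⟩ := Complex.isCoveringMapOn_exp.existsUnique_continuousMap_lifts F
    (Complex.exp_log (hF x₀)) hF
  exact ⟨L, congr_fun hL⟩

lemma im_exp_eq_zero_iff (z : ℂ) :
    (Complex.exp z).im = 0 ↔ z.im / π ∈ range ((↑) : ℤ → ℝ) := by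
  simp [Complex.exp_im, Real.exp_ne_zero, Real.sin_eq_zero_iff, eq_div_iff Real.pi_ne_zero]

lemma sign_sin_eq_sign {x : ℝ} (hx : |x| < π) : SignType.sign (Real.sin x) = SignType.sign x := by
  obtain ⟨hlower, hupper⟩ := abs_lt.1 hx
  rcases lt_trichotomy x 0 with hneg | rfl | hpos
  · rw [sign_neg hneg, sign_neg (Real.sin_neg_of_neg_of_neg_pi_lt hneg hlower)]
  · rw [Real.sin_zero]
  · rw [sign_pos hpos, sign_pos (Real.sin_pos_of_pos_of_lt_pi hpos hupper)]

lemma crossesWithSign_im_div_pi {A : ℝ → ℂ} {t d : ℝ} {ε : ℤ} (hA : ContinuousAt A t)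
    (him : (Complex.exp (A t)).im = 0)
    (hd : HasDerivAt (fun s => (Complex.exp (A s)).im) d t)
    (hε : 0 < ε * ((Complex.exp (A t)).re * d)) :
    CrossesWithSign (fun s => (A s).im / π) t ε := by
  have hslope : ∀ᶠ s in 𝓝[≠] t, 0 < ε * ((Complex.exp (A t)).re *
      ((Complex.exp (A s)).im / (s - t))) := by
    have hlim := ((hasDerivAt_iff_tendsto_slope.1 hd).const_mul (Complex.exp (A t)).re).const_mul
      (ε : ℝ)
    simpa only [slope_def_field, him, sub_zero] using hlim.eventually_const_lt hε
  have hnear : ∀ᶠ s in 𝓝[≠] t, |(A s).im - (A t).im| < π := by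
    have hcont : ContinuousAt (fun s => |(A s).im - (A t).im|) t :=
      ((Complex.continuous_im.continuousAt.comp hA).sub continuousAt_const).abs
    exact nhdsWithin_le_nhds (hcont.eventually_lt_const (by simp [Real.pi_pos]))
  filter_upwards [hslope, hnear, self_mem_nhdsWithin] with s hs hsπ hst
  have hsin : (Complex.exp (A t)).re * (Complex.exp (A s)).im =
      Real.exp (A t).re * Real.exp (A s).re * Real.sin ((A s).im - (A t).im) := by
    have hsin_t : Real.sin (A t).im = 0 := by
      simpa [Complex.exp_im, Real.exp_ne_zero] using him
    rw [Real.sin_sub, hsin_t, Complex.exp_re, Complex.exp_im]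
    ring
  have hsin_pos : 0 < ε * (Real.exp (A t).re * Real.exp (A s).re *
      Real.sin ((A s).im - (A t).im) * (s - t)) := by
    have hst' : s - t ≠ 0 := sub_ne_zero.2 hst
    rw [← hsin]
    have hclear : ε * ((Complex.exp (A t)).re * ((Complex.exp (A s)).im / (s - t))) *
        (s - t) ^ 2 = ε * ((Complex.exp (A t)).re * (Complex.exp (A s)).im * (s - t)) := by
      field_simp
    exact hclear ▸ mul_pos hs (sq_pos_of_ne_zero hst')
  change 0 < ε * (((A s).im / π - (A t).im / π) * (s - t))
  rw [← sub_div]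
  simp only [← sign_eq_one_iff, div_eq_mul_inv, sign_mul, sign_sin_eq_sign hsπ,
    sign_pos (Real.exp_pos _), sign_pos (inv_pos.2 Real.pi_pos), one_mul, mul_one]
    at hsin_pos ⊢
  exact hsin_pos

/-! ### The gradient along the unit circle -/

/-- The isometric identification `(x, y) ↦ x + iy` of the plane with `ℂ`. -/
def planeIso : E2 ≃ₗᵢ[ℝ] ℂ := Complex.orthonormalBasisOneI.repr.symm

lemma planeIso_sphPt (t : ℝ) : planeIso (sphPt t) = Complex.exp (t * Complex.I) := by
  simp [planeIso, sphPt, Complex.exp_mul_I]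

lemma norm_sphPt (t : ℝ) : ‖sphPt t‖ = 1 := by
  rw [← planeIso.norm_map, planeIso_sphPt, Complex.norm_exp_ofReal_mul_I]

lemma sphPt_eq_planeIso_symm :
    sphPt = fun t : ℝ => planeIso.symm (Complex.exp (t * Complex.I)) := by
  ext1 t
  rw [← planeIso_sphPt, planeIso.symm_apply_apply]

lemma sphPt_periodic : Function.Periodic sphPt (2 * π) := fun t => by simp [sphPt]

lemma hasDerivAt_sphPt (t : ℝ) :
    HasDerivAt sphPt (planeIso.symm (Complex.I * Complex.exp (t * Complex.I))) t := by
  rw [sphPt_eq_planeIso_symm]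
  have hexp : HasDerivAt (fun t : ℝ => Complex.exp (t * Complex.I))
      (Complex.I * Complex.exp (t * Complex.I)) t := by
    simpa [mul_comm] using ((hasDerivAt_id t).ofReal_comp.mul_const Complex.I).cexp
  exact planeIso.symm.toContinuousLinearEquiv.hasFDerivAt.comp_hasDerivAt t hexp

/-- The gradient of `f` at the point of the unit circle with angle `t`, written in the rotating
orthonormal frame `(p, p')` with `p = sphPt t`: the real part is its radial component and the
imaginary part its tangential component. -/
def movingGradient (f : E2 → ℝ) (t : ℝ) : ℂ :=
  ⟨⟪gradient f (sphPt t), sphPt t⟫, deriv (fun s => f (sphPt s)) t⟩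

lemma movingGradient_eq_exp_mul {f : E2 → ℝ} {t : ℝ} (hf : DifferentiableAt ℝ f (sphPt t)) :
    movingGradient f t = Complex.exp (-(t * Complex.I)) * planeIso (gradient f (sphPt t)) := by
  have hconj : conj (Complex.exp (t * Complex.I)) = Complex.exp (-(t * Complex.I)) := by
    simp [← Complex.exp_conj]
  have hderiv : deriv (fun s => f (sphPt s)) t =
      ⟪gradient f (sphPt t), planeIso.symm (Complex.I * Complex.exp (t * Complex.I))⟫ := by
    rw [inner_gradient_left]
    exact (hf.hasFDerivAt.comp_hasDerivAt t (hasDerivAt_sphPt t)).deriv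
  apply Complex.ext <;> rw [← hconj]
  · change ⟪gradient f (sphPt t), sphPt t⟫ = _
    rw [← planeIso.inner_map_map, planeIso_sphPt, Complex.inner]
    simp only [Complex.mul_re, Complex.conj_re, Complex.conj_im]
    ring
  · change deriv (fun s => f (sphPt s)) t = _
    rw [hderiv, ← planeIso.inner_map_map, planeIso.apply_symm_apply, Complex.inner]
    simp only [Complex.mul_re, Complex.mul_im, Complex.I_re, Complex.I_im, Complex.conj_re,
      Complex.conj_im]
    ring

lemma exists_continuousMap_exp_eq_gradient {f : E2 → ℝ}
    (hf : ContinuousOn (fderiv ℝ f) (Metric.closedBall 0 1))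
    (hf0 : ∀ x ∈ Metric.closedBall (0 : E2) 1, fderiv ℝ f x ≠ 0) :
    ∃ L : C(Metric.closedBall (0 : E2) 1, ℂ), ∀ x, Complex.exp (L x) = planeIso (gradient f x) := by
  have hconvex := convex_closedBall (0 : E2) 1
  have := hconvex.contractibleSpace ⟨0, by simp⟩
  have := hconvex.locallyPathConnectedSpace
  have hgrad : ContinuousOn (fun x => planeIso (gradient f x)) (Metric.closedBall 0 1) :=
    planeIso.continuous.comp_continuousOn
      ((InnerProductSpace.toDual ℝ E2).symm.continuous.comp_continuousOn hf)
  refine exists_continuousMap_exp_eq ⟨_, hgrad.domRestrict⟩ fun x => ?_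
  simpa [gradient] using hf0 x x.2

lemma exists_continuous_exp_eq_movingGradient {f : E2 → ℝ}
    (hf : ContinuousOn (fderiv ℝ f) (Metric.closedBall 0 1))
    (hf0 : ∀ x ∈ Metric.closedBall (0 : E2) 1, fderiv ℝ f x ≠ 0) :
    ∃ A : ℝ → ℂ, Continuous A ∧ (∀ t, Complex.exp (A t) = movingGradient f t) ∧
      ∀ t, A (t + 2 * π) = A t - 2 * π * Complex.I := by
  obtain ⟨L, hL⟩ := exists_continuousMap_exp_eq_gradient hf hf0
  have hsph (t : ℝ) : sphPt t ∈ Metric.closedBall (0 : E2) 1 := by simp [norm_sphPt]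
  let q (t : ℝ) : Metric.closedBall (0 : E2) 1 := ⟨sphPt t, hsph t⟩
  have hq : Continuous q :=
    (continuous_iff_continuousAt.2 fun t => (hasDerivAt_sphPt t).continuousAt).subtype_mk hsph
  have hq_periodic : Function.Periodic q (2 * π) := fun t => Subtype.ext (sphPt_periodic t)
  refine ⟨fun t => L (q t) - t * Complex.I, by fun_prop, fun t => ?_, fun t => ?_⟩
  · have hdiff : DifferentiableAt ℝ f (sphPt t) :=
      not_imp_comm.1 fderiv_zero_of_not_differentiableAt (hf0 _ (hsph t))
    beta_reduce
    rw [movingGradient_eq_exp_mul hdiff, sub_eq_neg_add, Complex.exp_add, hL]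
  · beta_reduce
    rw [hq_periodic]
    push_cast
    ring

theorem stmt_4_general {f : E2 → ℝ} (hf : ContinuousOn (fderiv ℝ f) (Metric.closedBall 0 1))
    (hf0 : ∀ x ∈ Metric.closedBall (0 : E2) 1, fderiv ℝ f x ≠ 0)
    {ι : Type*} [Fintype ι] {θ : ι → ℝ} (hinj : θ.Injective) (hmem : ∀ i, θ i ∈ Ico 0 (2 * π))
    (hnode : ∀ t ∈ Ico 0 (2 * π), deriv (fun s => f (sphPt s)) t = 0 ↔ t ∈ range θ)
    {ν : ι → ℤ} (hν : ∀ i, ν i = 1 ∨ ν i = -1)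
    (hsign : ∀ i, ν i * ⟪gradient f (sphPt (θ i)), sphPt (θ i)⟫ *
      deriv (deriv fun s => f (sphPt s)) (θ i) < 0) :
    ∑ i, ν i = 2 := by
  obtain ⟨A, hA, hexp, hperiod⟩ := exists_continuous_exp_eq_movingGradient hf hf0
  have him (t : ℝ) : (Complex.exp (A t)).im = deriv (fun s => f (sphPt s)) t := by
    rw [hexp, movingGradient]
  have hcross (i : ι) : CrossesWithSign (fun t => (A t).im / π) (θ i) (-ν i) := by
    have hdiff : DifferentiableAt ℝ (deriv fun s => f (sphPt s)) (θ i) :=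
      not_imp_comm.1 deriv_zero_of_not_differentiableAt (right_ne_zero_of_mul (hsign i).ne)
    refine crossesWithSign_im_div_pi hA.continuousAt
      ((him _).trans ((hnode _ (hmem i)).2 ⟨i, rfl⟩))
      (hdiff.hasDerivAt.congr_of_eventuallyEq (.of_forall him)) ?_
    rw [hexp, movingGradient]
    push_cast
    linarith [hsign i]
  have hcount : ∑ i, -ν i = -2 := by
    refine sum_crossing_signs_eq_of_add_period (by fun_prop) Real.two_pi_pos (fun t => ?_) hinj
      hmem (fun t ht => ?_) (fun i => ?_) hcross
    · have hturn : (2 * π * Complex.I).im = 2 * π := by simp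
      rw [hperiod, Complex.sub_im, hturn, sub_div, mul_div_cancel_right₀ _ Real.pi_ne_zero]
      push_cast
      ring
    · rw [← im_exp_eq_zero_iff, him, hnode t ht]
    · rcases hν i with h | h <;> simp [h]
  rw [Finset.sum_neg_distrib] at hcount
  linarith

lemma Ribbon.deriv_eq_zero_iff {n : ℕ} (a : Ribbon n) {t : ℝ} (ht : t ∈ Ico 0 (2 * π)) :
    deriv a.g t = 0 ↔ t ∈ range a.θ :=
  ⟨fun h => (a.crit_only t ht h).imp fun _ => Eq.symm, by rintro ⟨i, rfl⟩; exact a.node_crit i⟩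

lemma IsExtension.fderiv_ne_zero {n : ℕ} {a : Ribbon n} {f : E2 → ℝ} (hf : IsExtension a f)
    (hcrit : critPts f = ∅) {x : E2} (hx : x ∈ Metric.closedBall 0 1) : fderiv ℝ f x ≠ 0 := by
  rw [← Metric.ball_union_sphere] at hx
  rcases hx with hball | hsphere
  · exact fun h => (eq_empty_iff_forall_notMem.1 hcrit x) ⟨hball, h⟩
  · exact hf.2.2.1 x hsphere

lemma IsExtension.sign_mul_radial_mul_deriv_neg {n : ℕ} {a : Ribbon n} {f : E2 → ℝ}
    (hf : IsExtension a f) (i : Fin n) :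
    a.ν i * ⟪gradient f (sphPt (a.θ i)), sphPt (a.θ i)⟫ * deriv (deriv a.g) (a.θ i) < 0 := by
  rcases lt_or_gt_of_ne (a.node_nondeg i) with hmax | hmin
  · exact mul_neg_of_pos_of_neg ((hf.2.2.2 i).1 hmax) hmax
  · exact mul_neg_of_neg_of_pos ((hf.2.2.2 i).2 hmin) hmin

/-- If a ribbon `a` admits an extension with no critical points in the open unit disk
(that is, `γ(a) = 0`), then its signature satisfies `σ(a) = 2`. -/
theorem stmt_4 (n : ℕ) (a : Ribbon n)
    (h : ∃ f : E2 → ℝ, IsExtension a f ∧ critPts f = ∅) :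
    a.sigma = 2 := by
  obtain ⟨f, hf, hcrit⟩ := h
  have hg : a.g = fun t => f (sphPt t) := (funext hf.2.1).symm
  exact stmt_4_general (hf.1.continuous_fderiv (by simp)).continuousOn
    (fun _ => hf.fderiv_ne_zero hcrit) a.theta_mono.injective a.theta_mem
    (fun _ ht => hg ▸ a.deriv_eq_zero_iff ht) a.nu_sign
    (fun i => hg ▸ hf.sign_mul_radial_mul_deriv_neg i)
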